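/- Let k be a field and let q : C ⟶ V be a morphism of chain complexes of k-vector spaces which is a quasi-isomorphism and is surjective in every degree. Then q admits a section: there exists a chain map r : V ⟶ C with q ∘ r = id_V. -/

import Mathlib

open CategoryTheory

/-- The lifting property against the acyclic kernel of `q`, for maps out of any module. -/
theorem lift_aux
    {k : Type} [Field k]
    {C V : HomologicalComplex (ModuleCat.{0} k) (ComplexShape.down ℤ)}
    (q : C ⟶ V) (hq : QuasiIso q)
    (hsurj : ∀ i : ℤ, Function.Surjective (q.f i))
    (i j l : ℤ) (hij : j + 1 = i) (hjl : l + 1 = j)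
    (A : ModuleCat.{0} k) (x : A ⟶ C.X j) (hx : x ≫ C.d j l = 0) (hxq : x ≫ q.f j = 0) :
    ∃ t : A ⟶ C.X i, t ≫ C.d i j = x ∧ t ≫ q.f i = 0 := by
  have hsplit : ∀ {X Y : ModuleCat.{0} k} (p : X ⟶ Y), Function.Surjective p →
      ∃ s : Y ⟶ X, s ≫ p = 𝟙 Y := by
    intro X Y p hp
    have : Module.Free k Y := Module.Free.of_divisionRing k Y
    have : Module.Projective k Y := Module.Projective.of_free
    obtain ⟨s, hs⟩ := p.hom.exists_rightInverse_of_surjective (LinearMap.range_eq_top.2 hp)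
    exact ⟨ModuleCat.ofHom s, by ext y; exact LinearMap.congr_fun hs y⟩
  have hn : ∀ a b : ℤ, b + 1 = a → (ComplexShape.down ℤ).next a = b := fun a b h =>
    (ComplexShape.down ℤ).next_eq' h
  have hp : ∀ a b : ℤ, b + 1 = a → (ComplexShape.down ℤ).prev b = a := fun a b h =>
    (ComplexShape.down ℤ).prev_eq' h
  have hm : Mono (HomologicalComplex.homologyMap q j) := inferInstance
  have he : Epi (HomologicalComplex.homologyMap q i) := inferInstance
  rw [HomologicalComplex.mono_homologyMap_iff_up_to_refinements q i j l (hp _ _ hij)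
    (hn _ _ hjl)] at hm
  rw [HomologicalComplex.epi_homologyMap_iff_up_to_refinements q (i + 1) i j (hp _ _ rfl)
    (hn _ _ hij)] at he
  obtain ⟨A', π, hπ, b, hb⟩ := hm x hx 0 (by simp [hxq])
  obtain ⟨σ, hσ⟩ := hsplit π ((ModuleCat.epi_iff_surjective π).1 hπ)
  have hb' : (σ ≫ b) ≫ C.d i j = x := by
    rw [Category.assoc, ← hb, ← Category.assoc, hσ, Category.id_comp]
  generalize σ ≫ b = b' at hb'
  obtain ⟨A'', π', hπ', z, hz, w, hw⟩ := he (b' ≫ q.f i) (by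
    rw [Category.assoc, q.comm, ← Category.assoc, hb', hxq])
  obtain ⟨τ, hτ⟩ := hsplit π' ((ModuleCat.epi_iff_surjective π').1 hπ')
  obtain ⟨s, hs⟩ := hsplit (q.f (i + 1)) (hsurj (i + 1))
  refine ⟨b' - τ ≫ z - τ ≫ w ≫ s ≫ C.d (i + 1) i, ?_, ?_⟩
  · simp [hz, hb']
  · have h1 : b' ≫ q.f i = τ ≫ (z ≫ q.f i + w ≫ V.d (i + 1) i) := by
      rw [← hw, ← Category.assoc, hτ, Category.id_comp]
    have h2 : s ≫ C.d (i + 1) i ≫ q.f i = V.d (i + 1) i := by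
      rw [← q.comm, ← Category.assoc, hs, Category.id_comp]
    simp only [Preadditive.sub_comp, Category.assoc, h1, h2, Preadditive.comp_add]
    abel

/-- A linear choice of lifts along the differential of the acyclic kernel of `q`. -/
theorem choice_aux
    {k : Type} [Field k]
    {C V : HomologicalComplex (ModuleCat.{0} k) (ComplexShape.down ℤ)}
    (q : C ⟶ V) (hq : QuasiIso q)
    (hsurj : ∀ i : ℤ, Function.Surjective (q.f i)) (j i : ℤ) :
    ∃ t : C.X j →ₗ[k] C.X i, j + 1 = i → ∀ x : C.X j, (∀ l, C.d j l x = 0) → q.f j x = 0 →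
      C.d i j (t x) = x ∧ q.f i (t x) = 0 := by
  by_cases hij : j + 1 = i
  · let P : Submodule k (C.X j) :=
      LinearMap.ker (C.d j (j - 1)).hom ⊓ LinearMap.ker (q.f j).hom
    obtain ⟨t, ht, htq⟩ := lift_aux q hq hsurj i j (j - 1) hij (by simp) (ModuleCat.of k P)
      (ModuleCat.ofHom P.subtype) (by ext x; exact x.2.1) (by ext x; exact x.2.2)
    obtain ⟨g, hg⟩ := LinearMap.exists_extend t.hom
    refine ⟨g, fun _ x hx hxq => ?_⟩
    have hgx : g x = t.hom ⟨x, hx _, hxq⟩ := LinearMap.congr_fun hg ⟨x, hx _, hxq⟩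
    rw [hgx]
    exact ⟨ConcreteCategory.congr_hom ht ⟨x, hx _, hxq⟩,
      ConcreteCategory.congr_hom htq ⟨x, hx _, hxq⟩⟩
  · exact ⟨0, fun h => absurd h hij⟩

/-- Over a field, any quasi-isomorphism of chain complexes which is surjective in every
degree admits a section. -/
theorem section_of_quasiIso_of_surjective
    {k : Type} [Field k]
    {C V : HomologicalComplex (ModuleCat.{0} k) (ComplexShape.down ℤ)}
    (q : C ⟶ V) (hq : QuasiIso q)
    (hsurj : ∀ i : ℤ, Function.Surjective (q.f i)) :
    ∃ r : V ⟶ C, r ≫ q = 𝟙 V := by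
  choose t ht using choice_aux q hq hsurj
  have hs : ∀ i, ∃ s : V.X i →ₗ[k] C.X i, ∀ v, q.f i (s v) = v := fun i => by
    obtain ⟨s, hs⟩ := (q.f i).hom.exists_rightInverse_of_surjective
      (LinearMap.range_eq_top.2 (hsurj i))
    exact ⟨s, fun v => LinearMap.congr_fun hs v⟩
  choose s hs using hs
  have hdd : ∀ a b c (x : C.X a), C.d b c (C.d a b x) = 0 := fun a b c x =>
    ConcreteCategory.congr_hom (C.d_comp_d a b c) x
  have hdd' : ∀ a b c (x : V.X a), V.d b c (V.d a b x) = 0 := fun a b c x =>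
    ConcreteCategory.congr_hom (V.d_comp_d a b c) x
  have hqd : ∀ a b (x : C.X a), q.f b (C.d a b x) = V.d a b (q.f a x) := fun a b x =>
    (ConcreteCategory.congr_hom (q.comm a b) x).symm
  -- the obstruction to `s` being a chain map
  let e : ∀ a b : ℤ, V.X a →ₗ[k] C.X b := fun a b =>
    s b ∘ₗ (V.d a b).hom - (C.d a b).hom ∘ₗ s a
  have he : ∀ a b v, e a b v = s b (V.d a b v) - C.d a b (s a v) := fun a b v => rfl
  have heq : ∀ a b v, q.f b (e a b v) = 0 := fun a b v => by
    rw [he, map_sub, hs, hqd, hs, sub_self]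
  have hde : ∀ a b c v, C.d b c (e a b v) = - e b c (V.d a b v) := fun a b c v => by
    rw [he, he, map_sub, hdd, hdd', map_zero]; abel
  -- the contraction of the kernel
  let h : ∀ b a : ℤ, C.X b →ₗ[k] C.X a := fun b a =>
    t b a ∘ₗ (LinearMap.id - t (b - 1) b ∘ₗ (C.d b (b - 1)).hom)
  have hh : ∀ b a x, h b a x = t b a (x - t (b - 1) b (C.d b (b - 1) x)) := fun b a x => rfl
  have hdx : ∀ b x, q.f b x = 0 →
      C.d b (b - 1) (t (b - 1) b (C.d b (b - 1) x)) = C.d b (b - 1) x ∧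
      q.f b (t (b - 1) b (C.d b (b - 1) x)) = 0 := fun b x hx =>
    ht (b - 1) b (by simp) _ (fun l => hdd _ _ _ _) (by rw [hqd, hx, map_zero])
  have hh1 : ∀ b a x, b + 1 = a → q.f b x = 0 →
      C.d a b (h b a x) = x - t (b - 1) b (C.d b (b - 1) x) ∧ q.f a (h b a x) = 0 := by
    intro b a x hba hx
    rw [hh]
    refine ht b a hba _ (fun l => ?_) (by rw [map_sub, hx, (hdx b x hx).2, sub_zero])
    by_cases hl : l = b - 1
    · subst hl
      rw [map_sub, (hdx b x hx).1, sub_self]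
    · rw [C.shape b l (fun hr => hl (by change l + 1 = b at hr; omega))]
      rfl
  have hh2 : ∀ b x, h (b - 1) b (C.d b (b - 1) x) = t (b - 1) b (C.d b (b - 1) x) := by
    intro b x
    rw [hh, hdd, map_zero, sub_zero]
  refine ⟨{ f := fun a => ModuleCat.ofHom (s a + h (a - 1) a ∘ₗ e a (a - 1)), comm' := ?_ }, ?_⟩
  · intro a b hab
    obtain rfl : b = a - 1 := by change b + 1 = a at hab; omega
    ext v
    change C.d a (a - 1) (s a v + h (a - 1) a (e a (a - 1) v)) =
      s (a - 1) (V.d a (a - 1) v) + h (a - 1 - 1) (a - 1) (e (a - 1) (a - 1 - 1) (V.d a (a - 1) v))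
    rw [map_add, (hh1 (a - 1) a _ (by simp) (heq _ _ _)).1, ← hh2, hde, map_neg, he a]
    abel
  · ext a v
    change q.f a (s a v + h (a - 1) a (e a (a - 1) v)) = v
    rw [map_add, hs, (hh1 (a - 1) a _ (by simp) (heq _ _ _)).2, add_zero]
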